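/- arXiv:2312.01466 — 4 statements merged into one kernel-verified Lean document; each statement's English description precedes it below -/
import Mathlib

section
/- For every real number α > 0, the class K_α of hereditarily α-sparse finite graphs is indivisible if and only if α > 2. -/
open SimpleGraph

/-- `δ_α(G) = |V(G)| − α·e(G)`, where `e(G)` is the number of edges of `G`. -/
noncomputable def deltaAlpha (α : ℝ) {V : Type} (G : SimpleGraph V) : ℝ :=
  (Nat.card V : ℝ) - α * (Nat.card G.edgeSet : ℝ)

/-- `G ∈ K_α`: `δ_α(H) ≥ 0` for every induced subgraph `H` of `G`. -/
def MemKalpha (α : ℝ) {V : Type} (G : SimpleGraph V) : Prop :=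
  ∀ s : Set V, 0 ≤ deltaAlpha α (G.induce s)

/-- A class of finite simple graphs (indexed by the number of vertices) is indivisible. -/
def Indivisible (K : ∀ n : ℕ, SimpleGraph (Fin n) → Prop) : Prop :=
  ∀ (n : ℕ) (A : SimpleGraph (Fin n)), K n A → ∀ k : ℕ, 0 < k →
    ∃ (m : ℕ) (B : SimpleGraph (Fin m)), K m B ∧
      ∀ c : Fin m → Fin k, ∃ f : A ↪g B, ∀ x y, c (f x) = c (f y)

/-- If every nonempty induced subgraph has a vertex of degree less than `k`, then every finite set
of vertices is properly coloured by some `k`-colouring. -/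
lemma SimpleGraph.exists_properOn_of_degenerate {V : Type*} (G : SimpleGraph V) {k : ℕ} (hk : 0 < k)
    (h : ∀ s : Finset V, s.Nonempty →
      ∃ v : s, Nat.card ((G.induce (s : Set V)).neighborSet v) < k) (s : Finset V) :
    ∃ c : V → Fin k, ∀ u ∈ s, ∀ v ∈ s, G.Adj u v → c u ≠ c v := by
  classical
  induction s using Finset.strongInduction with
  | H s ih =>
    obtain rfl | hs := s.eq_empty_or_nonempty
    · exact ⟨fun _ => ⟨0, hk⟩, by simp⟩
    obtain ⟨v, hv⟩ := h s hs
    obtain ⟨c, hc⟩ := ih _ (Finset.erase_ssubset v.2)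
    rw [Nat.card_eq_fintype_card, card_neighborSet_eq_degree] at hv
    obtain ⟨a, ha⟩ : ∃ a : Fin k,
        a ∉ ((G.induce (s : Set V)).neighborFinset v).image (fun u : (s : Set V) => c u) := by
      by_contra! hall
      have hcard := Finset.card_le_card (fun a _ => hall a : Finset.univ ⊆ _)
      have himage := hcard.trans Finset.card_image_le
      rw [Finset.card_univ, Fintype.card_fin, card_neighborFinset_eq_degree] at himage
      omega
    have hne : ∀ u ∈ s, G.Adj v u → c u ≠ a := fun u hu huv hcu =>
      ha (Finset.mem_image.2 ⟨⟨u, hu⟩, by simpa using huv, hcu⟩)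
    refine ⟨Function.update c v a, fun u hu w hw huw => ?_⟩
    by_cases huv : u = v
    · have hwv : w ≠ v := fun h => huw.ne (huv.trans h.symm)
      rw [huv, Function.update_self, Function.update_of_ne hwv]
      exact (hne w hw (huv ▸ huw)).symm
    · rw [Function.update_of_ne huv]
      by_cases hwv : w = v
      · rw [hwv, Function.update_self]
        exact hne u hu (hwv ▸ huw.symm)
      · rw [Function.update_of_ne hwv]
        exact hc u (Finset.mem_erase.2 ⟨huv, hu⟩) w (Finset.mem_erase.2 ⟨hwv, hw⟩) huw

/-- A nonempty finite graph with `δ_α ≥ 0` has a vertex of degree less than any `k > 2 / α`. -/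
lemma exists_degree_lt_of_deltaAlpha_nonneg {α : ℝ} (hα : 0 < α) {V : Type} [Finite V] [Nonempty V]
    {G : SimpleGraph V} (hG : 0 ≤ deltaAlpha α G) {k : ℕ} (hk : 2 < α * k) :
    ∃ v, Nat.card (G.neighborSet v) < k := by
  classical
  have := Fintype.ofFinite V
  by_contra! hdeg
  have hsum := G.sum_degrees_eq_twice_card_edges
  have hle : Fintype.card V * k ≤ ∑ v, G.degree v := by
    rw [← smul_eq_mul, ← Finset.card_univ]
    refine Finset.card_nsmul_le_sum _ _ _ fun v _ => ?_
    rw [← card_neighborSet_eq_degree, ← Nat.card_eq_fintype_card]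
    exact hdeg v
  rw [hsum] at hle
  have hle' : (Fintype.card V : ℝ) * k ≤ 2 * G.edgeFinset.card := by exact_mod_cast hle
  rw [deltaAlpha, Nat.card_eq_fintype_card, Nat.card_eq_fintype_card, ← edgeFinset_card] at hG
  have hpos : (0 : ℝ) < Fintype.card V := by exact_mod_cast Fintype.card_pos
  nlinarith [mul_le_mul_of_nonneg_left hle' hα.le, mul_lt_mul_of_pos_right hk hpos]

/-- Graphs in `K_α` are `k`-colourable for every `k > 2 / α`. -/
lemma MemKalpha.colorable {α : ℝ} (hα : 0 < α) {V : Type} [Finite V] {G : SimpleGraph V}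
    (hG : MemKalpha α G) {k : ℕ} (hk : 2 < α * k) : G.Colorable k := by
  have := Fintype.ofFinite V
  have hkpos : 0 < k := Nat.pos_of_ne_zero fun h => by norm_num [h] at hk
  obtain ⟨c, hc⟩ := G.exists_properOn_of_degenerate hkpos (fun s hs => by
    have : Nonempty (s : Set V) := hs.to_subtype
    exact exists_degree_lt_of_deltaAlpha_nonneg hα (hG s) hk) Finset.univ
  exact ⟨Coloring.mk c fun {u v} huv => hc u (Finset.mem_univ u) v (Finset.mem_univ v) huv⟩

/-- The edgeless graph belongs to `K_α`. -/
lemma memKalpha_bot (α : ℝ) (V : Type) : MemKalpha α (⊥ : SimpleGraph V) := fun s => by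
  have : (⊥ : SimpleGraph V).induce s = ⊥ := by ext; simp
  simp [deltaAlpha, this]

/-- For `α ≤ 2`, every graph on at most two vertices belongs to `K_α`. -/
lemma memKalpha_of_card_le_two {α : ℝ} (hα : α ≤ 2) {V : Type} [Finite V] (hV : Nat.card V ≤ 2)
    (G : SimpleGraph V) : MemKalpha α G := fun s => by
  classical
  have := Fintype.ofFinite V
  have hs : Nat.card s ≤ 2 := (Nat.card_le_card_of_injective _ Subtype.val_injective).trans hV
  have hedge := (G.induce s).card_edgeFinset_le_card_choose_two
  rw [← Nat.card_eq_fintype_card] at hedge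
  have htwice : 2 * (G.induce s).edgeFinset.card ≤ Nat.card s := by
    generalize Nat.card s = n at hs hedge
    interval_cases n <;> simp only [Nat.choose] at hedge <;> omega
  have htwice' : 2 * ((G.induce s).edgeFinset.card : ℝ) ≤ Nat.card s := by exact_mod_cast htwice
  rw [deltaAlpha, Nat.card_eq_fintype_card (α := (G.induce s).edgeSet), ← edgeFinset_card]
  nlinarith [Nat.cast_nonneg (α := ℝ) (G.induce s).edgeFinset.card]

/-- For `α > 2`, the only graphs in `K_α` are the edgeless ones. -/
lemma MemKalpha.eq_bot {α : ℝ} (hα : 2 < α) {V : Type} {G : SimpleGraph V}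
    (hG : MemKalpha α G) : G = ⊥ := by
  refine eq_bot_iff_forall_not_adj.2 fun u v huv => ?_
  have h := hG {u, v}
  have hadj : (G.induce {u, v}).Adj ⟨u, by simp⟩ ⟨v, by simp⟩ := huv
  have : Nonempty (G.induce {u, v}).edgeSet := ⟨⟨s(_, _), hadj⟩⟩
  have hpos : (1 : ℝ) ≤ Nat.card (G.induce {u, v}).edgeSet := by exact_mod_cast Nat.card_pos
  rw [deltaAlpha, Nat.card_coe_set_eq, Set.ncard_pair huv.ne] at h
  push_cast at h
  nlinarith

theorem kalpha_indivisible_iff (α : ℝ) (hα : 0 < α) :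
    Indivisible (fun n (G : SimpleGraph (Fin n)) => MemKalpha α G) ↔ 2 < α := by
  constructor
  · intro h
    by_contra! hle
    obtain ⟨k, hk⟩ := exists_nat_gt (2 / α)
    rw [div_lt_iff₀' hα] at hk
    have hkpos : 0 < k := Nat.pos_of_ne_zero fun h => by norm_num [h] at hk
    obtain ⟨m, B, hB, hmono⟩ := h 2 ⊤ (memKalpha_of_card_le_two hle (by simp) ⊤) k hkpos
    obtain ⟨C⟩ := MemKalpha.colorable hα hB hk
    obtain ⟨f, hf⟩ := hmono C
    exact C.valid (f.map_adj_iff.2 (by simp : (⊤ : SimpleGraph (Fin 2)).Adj 0 1)) (hf 0 1)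
  · intro h n A hA k hk
    obtain rfl := MemKalpha.eq_bot h hA
    refine ⟨k * n, ⊥, memKalpha_bot _ _, fun c => ?_⟩
    have : Nonempty (Fin k) := ⟨⟨0, hk⟩⟩
    obtain ⟨a, ha⟩ := Fintype.exists_le_card_fiber_of_mul_le_card c (n := n) (by simp)
    obtain ⟨t, ht, htn⟩ := Finset.exists_subset_card_eq ha
    have hcol : ∀ x, c (t.orderEmbOfFin htn x) = a := fun x =>
      (Finset.mem_filter.1 (ht (t.orderEmbOfFin_mem htn x))).2
    exact ⟨⟨(t.orderEmbOfFin htn).toEmbedding, by simp⟩,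
      fun x y => (hcol x).trans (hcol y).symm⟩
end

section
/- For every real number α > 0, K_α^+ = ⋃_{γ > α} K_γ; that is, a finite simple graph G satisfies δ_α(H) > 0 for every non-empty induced subgraph H of G if and only if there exists a real γ > α such that δ_γ(H) ≥ 0 for every induced subgraph H of G. -/
open SimpleGraph

/-- The function `γ ↦ δ_γ(G)` is continuous. -/
theorem continuous_deltaAlpha {V : Type} (G : SimpleGraph V) :
    Continuous fun γ : ℝ => deltaAlpha γ G := by
  unfold deltaAlpha
  fun_prop

theorem deltaAlpha_of_isEmpty (α : ℝ) {V : Type} [IsEmpty V] (G : SimpleGraph V) :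
    deltaAlpha α G = 0 := by
  have h : G.edgeSet = ∅ := by
    rw [SimpleGraph.edgeSet_eq_empty]
    exact Subsingleton.elim _ _
  simp [deltaAlpha, h]

theorem deltaAlpha_pos_of_lt {α γ : ℝ} (h : α < γ) {V : Type} [Finite V] [Nonempty V]
    (G : SimpleGraph V) (hG : 0 ≤ deltaAlpha γ G) : 0 < deltaAlpha α G := by
  unfold deltaAlpha at *
  rcases Nat.eq_zero_or_pos (Nat.card G.edgeSet) with he | he
  · simp [he]
  · have he : (0 : ℝ) < Nat.card G.edgeSet := by exact_mod_cast he
    linarith [mul_lt_mul_of_pos_right h he]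

theorem kalphaPlus_eq_union_kgamma (α : ℝ) (hα : 0 < α)
    (V : Type) [Fintype V] (G : SimpleGraph V) :
    (∀ s : Set V, s.Nonempty → 0 < deltaAlpha α (G.induce s)) ↔
      ∃ γ : ℝ, α < γ ∧ ∀ s : Set V, 0 ≤ deltaAlpha γ (G.induce s) := by
  constructor
  · intro h
    have hev : ∀ᶠ γ in nhds α, ∀ s : Set V, 0 ≤ deltaAlpha γ (G.induce s) := by
      refine Filter.eventually_all.2 fun s => ?_
      rcases s.eq_empty_or_nonempty with rfl | hs
      · exact Filter.Eventually.of_forall fun γ => (deltaAlpha_of_isEmpty γ _).ge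
      · exact ((continuous_deltaAlpha _).continuousAt.eventually
          (lt_mem_nhds (h s hs))).mono fun _ => le_of_lt
    obtain ⟨γ, hγ, hαγ⟩ :=
      ((hev.filter_mono nhdsWithin_le_nhds).and (self_mem_nhdsWithin (s := Set.Ioi α))).exists
    exact ⟨γ, hαγ, hγ⟩
  · rintro ⟨γ, hαγ, hγ⟩ s hs
    have := hs.to_subtype
    exact deltaAlpha_pos_of_lt hαγ _ (hγ s)
end

section
/- For every real number α > 1, K_α is exactly the class of finite forests each of whose connected components has at most ⌊1/(α−1) + 1⌋ vertices; that is, a finite simple graph G satisfies δ_α(H) ≥ 0 for every induced subgraph H of G if and only if G is acyclic and every connected component of G has at most ⌊1/(α−1) + 1⌋ vertices. -/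
open SimpleGraph

namespace SimpleGraph

variable {V : Type*} {G : SimpleGraph V}

/-- A graph all of whose connected components are acyclic is acyclic. -/
lemma isAcyclic_of_forall_connectedComponent
    (h : ∀ C : G.ConnectedComponent, (G.induce C.supp).IsAcyclic) : G.IsAcyclic := by
  intro v p hp
  have hs : ∀ x ∈ p.support, x ∈ (G.connectedComponentMk v).supp := fun x hx ↦ by
    classical
    exact ConnectedComponent.eq.mpr (p.takeUntil x hx).reachable.symm
  refine h _ (p.induce _ hs) (Walk.IsCycle.of_map (f := (Embedding.induce _).toHom) ?_)
  rwa [Walk.map_induce]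

lemma ConnectedComponent.connected_induce_supp (C : G.ConnectedComponent) :
    (G.induce C.supp).Connected :=
  C.connected_toSimpleGraph

/-- The number of vertices is the sum of the sizes of the connected components. -/
lemma card_eq_sum_card_supp [Finite V] [Fintype G.ConnectedComponent] :
    Nat.card V = ∑ C : G.ConnectedComponent, Nat.card C.supp := by
  rw [← Nat.card_sigma]
  exact (Nat.card_congr (Equiv.sigmaFiberEquiv G.connectedComponentMk)).symm

/-- Every edge lies in some connected component. -/
lemma card_edgeSet_le_sum_card_edgeSet_induce_supp [Finite V] [Fintype G.ConnectedComponent] :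
    Nat.card G.edgeSet ≤ ∑ C : G.ConnectedComponent, Nat.card (G.induce C.supp).edgeSet := by
  rw [← Nat.card_sigma]
  refine Nat.card_le_card_of_surjective
    (fun x : Σ C : G.ConnectedComponent, (G.induce C.supp).edgeSet ↦
      (Embedding.induce x.1.supp).toHom.mapEdgeSet x.2) ?_
  rintro ⟨⟨u, v⟩, huv⟩
  have hadj : G.Adj u v := huv
  refine ⟨⟨G.connectedComponentMk u, s(⟨u, rfl⟩,
    ⟨v, ConnectedComponent.eq.mpr hadj.reachable.symm⟩), ?_⟩, ?_⟩
  · exact hadj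
  · rfl

/-- A connected component of an induced subgraph is no larger than the component of the
ambient graph containing it. -/
lemma exists_card_supp_induce_le [Finite V] (s : Set V) (C : (G.induce s).ConnectedComponent) :
    ∃ D : G.ConnectedComponent, Nat.card C.supp ≤ Nat.card D.supp := by
  refine ⟨C.map (Embedding.induce s).toHom, Nat.card_le_card_of_injective
    (fun x ↦ ⟨x.1.1, ?_⟩) fun x y hxy ↦ ?_⟩
  · obtain ⟨x, rfl⟩ := x
    rfl
  · simpa [Subtype.ext_iff] using hxy

end SimpleGraph

lemma le_floor_one_div_add_one_iff {α : ℝ} (hα : 1 < α) {n e : ℕ} (h : e + 1 = n) :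
    n ≤ ⌊1 / (α - 1) + 1⌋₊ ↔ 0 ≤ (n : ℝ) - α * e := by
  have hα' : 0 < α - 1 := sub_pos.mpr hα
  subst h
  rw [Nat.le_floor_iff (by positivity)]
  push_cast
  rw [add_le_add_iff_right, le_div_iff₀ hα']
  constructor <;> intro h <;> linarith

/-- A connected graph with `δ_α ≥ 0` for some `α > 1` is a tree. -/
lemma isTree_of_deltaAlpha_nonneg {α : ℝ} (hα : 1 < α) {V : Type} [Finite V]
    {G : SimpleGraph V} (hG : G.Connected) (h : 0 ≤ deltaAlpha α G) : G.IsTree := by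
  refine isTree_iff_connected_and_card.mpr ⟨hG, ?_⟩
  refine le_antisymm ?_ hG.card_vert_le_card_edgeSet_add_one
  have := hG.nonempty
  have hpos : (0 : ℝ) < Nat.card V := by exact_mod_cast Nat.card_pos
  rw [deltaAlpha] at h
  by_contra! hlt
  have hle : (Nat.card V : ℝ) ≤ Nat.card G.edgeSet := by exact_mod_cast Nat.lt_succ_iff.mp hlt
  nlinarith

/-- A forest with bounded components has `δ_α ≥ 0`. -/
lemma deltaAlpha_nonneg_of_isAcyclic {α : ℝ} (hα : 1 < α) {V : Type} [Finite V]
    {G : SimpleGraph V} (hG : G.IsAcyclic)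
    (h : ∀ C : G.ConnectedComponent, Nat.card C.supp ≤ ⌊1 / (α - 1) + 1⌋₊) :
    0 ≤ deltaAlpha α G := by
  have := Fintype.ofFinite G.ConnectedComponent
  have hC (C : G.ConnectedComponent) :
      0 ≤ (Nat.card C.supp : ℝ) - α * Nat.card (G.induce C.supp).edgeSet :=
    (le_floor_one_div_add_one_iff hα (isTree_iff_connected_and_card.mp
      ⟨C.connected_induce_supp, hG.induce _⟩).2).mp (h C)
  have hsum := Finset.sum_nonneg fun C (_ : C ∈ Finset.univ) ↦ hC C
  rw [Finset.sum_sub_distrib, ← Finset.mul_sum] at hsum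
  have he : (Nat.card G.edgeSet : ℝ) ≤
      ∑ C : G.ConnectedComponent, (Nat.card (G.induce C.supp).edgeSet : ℝ) := by
    exact_mod_cast card_edgeSet_le_sum_card_edgeSet_induce_supp (G := G)
  rw [deltaAlpha, card_eq_sum_card_supp (G := G), Nat.cast_sum]
  have := mul_le_mul_of_nonneg_left he (by linarith : 0 ≤ α)
  linarith

theorem kalpha_eq_bounded_forests (α : ℝ) (hα : 1 < α)
    (V : Type) [Fintype V] (G : SimpleGraph V) :
    MemKalpha α G ↔
      (G.IsAcyclic ∧
        ∀ C : G.ConnectedComponent, Nat.card C.supp ≤ ⌊1 / (α - 1) + 1⌋₊) := by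
  constructor
  · intro h
    have hT (C : G.ConnectedComponent) : (G.induce C.supp).IsTree :=
      isTree_of_deltaAlpha_nonneg hα C.connected_induce_supp (h C.supp)
    exact ⟨isAcyclic_of_forall_connectedComponent fun C ↦ (hT C).isAcyclic, fun C ↦
      (le_floor_one_div_add_one_iff hα (isTree_iff_connected_and_card.mp (hT C)).2).mpr
        (h C.supp)⟩
  · rintro ⟨hG, h⟩ s
    refine deltaAlpha_nonneg_of_isAcyclic hα (hG.induce s) fun C ↦ ?_
    obtain ⟨D, hD⟩ := exists_card_supp_induce_le s C
    exact hD.trans (h D)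
end

section
/- The class of all finite perfect graphs is indivisible. -/
open SimpleGraph

/-- The clique number of a graph: the size of its largest clique. -/
noncomputable def cliqueNumber {V : Type} (G : SimpleGraph V) : ℕ :=
  sSup {k : ℕ | ∃ t : Finset V, G.IsNClique k t}

/-- A graph is perfect if for every induced subgraph `H`, the chromatic number of `H`
equals the size of the largest clique of `H`. -/
def IsPerfect {V : Type} (G : SimpleGraph V) : Prop :=
  ∀ s : Set V, (G.induce s).chromaticNumber = (cliqueNumber (G.induce s) : ℕ∞)

/-- A combinatorial form of perfection: every vertex set `s` whose cliques have at most `N`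
vertices can be properly coloured with the colours `0, …, N - 1`. -/
def CliqueColorable {V : Type} (G : SimpleGraph V) : Prop :=
  ∀ (s : Set V) (N : ℕ), (∀ t : Finset V, ↑t ⊆ s → G.IsClique t → t.card ≤ N) →
    ∃ c : V → ℕ, (∀ v ∈ s, c v < N) ∧ ∀ u ∈ s, ∀ v ∈ s, G.Adj u v → c u ≠ c v

theorem IsPerfect.cliqueColorable {V : Type} [Fintype V] {G : SimpleGraph V}
    (hG : IsPerfect G) : CliqueColorable G := by
  classical
  intro s N h
  have hle : (G.induce s).cliqueNum ≤ N := by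
    obtain ⟨t, ht⟩ := (G.induce s).exists_isNClique_cliqueNum
    rw [← ht.card_eq, ← Finset.card_map (Function.Embedding.subtype _)]
    refine h _ ?_ ?_
    · intro x hx
      simp only [Finset.coe_map, Set.mem_image] at hx
      obtain ⟨y, -, rfl⟩ := hx
      exact y.2
    · intro x hx y hy hxy
      simp only [Finset.coe_map, Set.mem_image] at hx hy
      obtain ⟨x, hx, rfl⟩ := hx
      obtain ⟨y, hy, rfl⟩ := hy
      exact ht.isClique hx hy fun e => hxy (congrArg _ e)
  have hcol : (G.induce s).Colorable N := by
    rw [← chromaticNumber_le_iff_colorable, hG s]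
    exact_mod_cast hle
  obtain ⟨C⟩ := hcol
  refine ⟨fun v => if hv : v ∈ s then C ⟨v, hv⟩ else 0, fun v hv => ?_, fun u hu v hv huv => ?_⟩
  · simp [hv]
  · have := C.valid (v := ⟨u, hu⟩) (w := ⟨v, hv⟩) huv
    simpa [hu, hv, Fin.val_inj] using this

theorem CliqueColorable.isPerfect {V : Type} [Fintype V] {G : SimpleGraph V}
    (hG : CliqueColorable G) : IsPerfect G := by
  classical
  intro s
  refine le_antisymm ?_ (G.induce s).cliqueNum_le_chromaticNumber
  rw [chromaticNumber_le_iff_colorable]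
  obtain ⟨c, hc, hval⟩ := hG s (cliqueNumber (G.induce s)) fun t hts ht => by
    have hcl : (G.induce s).IsClique (t.subtype (· ∈ s) : Finset s) := by
      intro x hx y hy hxy
      exact ht (by simpa using hx) (by simpa using hy) fun e => hxy (Subtype.ext e)
    have := hcl.card_le_cliqueNum
    rwa [Finset.card_subtype, Finset.filter_true_of_mem fun x hx => hts hx] at this
  exact ⟨Coloring.mk (fun v => ⟨c v, hc v v.2⟩) fun {u v} huv e =>
    hval u u.2 v v.2 huv (congrArg Fin.val e)⟩

theorem CliqueColorable.of_embedding {V W : Type} {G : SimpleGraph V} {H : SimpleGraph W}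
    (hH : CliqueColorable H) (f : G ↪g H) : CliqueColorable G := by
  classical
  intro s N h
  obtain ⟨c, hc, hval⟩ := hH (f '' s) N fun t hts ht => by
    obtain ⟨u, hu, rfl⟩ := Finset.subset_set_image_iff.mp hts
    refine Finset.card_image_le.trans (h u hu fun x hx y hy hxy => ?_)
    exact f.map_adj_iff.mp (ht (by simpa using hx) (by simpa using hy) (f.injective.ne hxy))
  exact ⟨c ∘ f, fun v hv => hc _ ⟨v, hv, rfl⟩, fun u hu v hv huv =>
    hval _ ⟨u, hu, rfl⟩ _ ⟨v, hv, rfl⟩ (f.map_adj_iff.mpr huv)⟩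

/-- Weighted form of Lovász's replication lemma: if every clique has weight at most `N`, then
each vertex `v` can be given `w v` of `N` colours with adjacent vertices sharing none. -/
theorem CliqueColorable.exists_weighted_coloring {V : Type} [Fintype V] {G : SimpleGraph V}
    (hG : CliqueColorable G) (w : V → ℕ) (N : ℕ)
    (hw : ∀ t : Finset V, G.IsClique t → ∑ v ∈ t, w v ≤ N) :
    ∃ c : V → Finset ℕ, (∀ v, c v ⊆ Finset.range N) ∧ (∀ v, (c v).card = w v) ∧
      ∀ u v, G.Adj u v → Disjoint (c u) (c v) := by
  classical
  induction hn : ∑ v, w v using Nat.strong_induction_on generalizing w N with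
  | _ n ih =>
  by_cases hx : ∃ x, 2 ≤ w x
  · obtain ⟨x, hx⟩ := hx
    let w₁ : V → ℕ := fun v => if v = x then w v - 1 else w v
    have hw₁ : ∀ v, w₁ v + (if v = x then 1 else 0) = w v := by
      intro v
      by_cases hv : v = x
      · subst hv; simp [w₁]; omega
      · simp [w₁, hv]
    have hsum (t : Finset V) : ∑ v ∈ t, w₁ v + (if x ∈ t then 1 else 0) = ∑ v ∈ t, w v := by
      simp_rw [← hw₁, Finset.sum_add_distrib, Finset.sum_ite_eq']
    have htot := hsum Finset.univ
    simp only [Finset.mem_univ, if_true] at htot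
    obtain ⟨c, hcN, hcard, hdisj⟩ := ih _ (by omega) w₁ N
      (fun t ht => by have := hsum t; have := hw t ht; omega) rfl
    obtain ⟨i, hi⟩ : (c x).Nonempty := by
      rw [← Finset.card_pos, hcard]
      simp [w₁]
      omega
    have hN : 0 < N := (Nat.zero_le i).trans_lt (Finset.mem_range.mp (hcN x hi))
    let P : V → Prop := fun v => i ∈ c v ∧ v ≠ x
    let w₂ : V → ℕ := fun v => if P v then w₁ v - 1 else w₁ v
    have hw₂ : ∀ v, w₂ v + (if P v then 1 else 0) = w₁ v := by
      intro v
      by_cases hv : P v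
      · have : 0 < w₁ v := hcard v ▸ Finset.card_pos.mpr ⟨i, hv.1⟩
        simp [w₂, hv]; omega
      · simp [w₂, hv]
    have hle : ∀ v, w₂ v ≤ w₁ v := fun v => by have := hw₂ v; omega
    have hlt : ∑ v, w₂ v < n := by
      have := Finset.sum_le_sum fun v (_ : v ∈ Finset.univ) => hle v
      omega
    have hclique : ∀ t : Finset V, G.IsClique t → ∑ v ∈ t, w₂ v ≤ N - 1 := by
      intro t ht
      by_contra! hgt
      have h₁₂ := Finset.sum_le_sum fun v (_ : v ∈ t) => hle v
      have h₁ := hsum t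
      have h₀ := hw t ht
      have hxt : x ∉ t := fun hxt => by simp only [hxt, if_true] at h₁; omega
      have hU : t.biUnion c = Finset.range N := by
        refine Finset.eq_of_subset_of_card_le (Finset.biUnion_subset.mpr fun v _ => hcN v) ?_
        rw [Finset.card_biUnion fun u hu v hv huv => hdisj u v (ht hu hv huv)]
        simp_rw [hcard, Finset.card_range]
        omega
      obtain ⟨y, hy, hiy⟩ := Finset.mem_biUnion.mp (hU ▸ hcN x hi)
      have hPy : P y := ⟨hiy, fun e => hxt (e ▸ hy)⟩
      have : ∑ v ∈ t, w₂ v < ∑ v ∈ t, w₁ v :=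
        Finset.sum_lt_sum (fun v _ => hle v)
          ⟨y, hy, by have := hw₂ y; simp only [hPy, if_true] at this; omega⟩
      omega
    obtain ⟨d, hdN, hdcard, hddisj⟩ := ih _ hlt w₂ (N - 1) hclique rfl
    have hnotMem : ∀ v, N - 1 ∉ d v := fun v hv => by simpa using hdN v hv
    refine ⟨fun v => if i ∈ c v then insert (N - 1) (d v) else d v, fun v => ?_, fun v => ?_,
      fun u v huv => ?_⟩
    · have hsub : d v ⊆ Finset.range N :=
        (hdN v).trans (Finset.range_subset_range.mpr (Nat.sub_le _ _))
      dsimp only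
      split_ifs
      · exact Finset.insert_subset (Finset.mem_range.mpr (by omega)) hsub
      · exact hsub
    · have h₁ := hw₁ v
      have h₂ := hw₂ v
      by_cases hv : v = x
      · subst hv
        simp only [P, ne_eq, not_true_eq_false, and_false, if_false, if_true] at h₁ h₂
        simp only [hi, if_true, Finset.card_insert_of_notMem (hnotMem v), hdcard]
        omega
      · by_cases hiv : i ∈ c v
        · simp only [P, hv, hiv, ne_eq, not_false_eq_true, and_self, if_false, if_true] at h₁ h₂
          simp only [hiv, if_true, Finset.card_insert_of_notMem (hnotMem v), hdcard]
          omega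
        · simp only [P, hv, hiv, false_and, if_false] at h₁ h₂
          simp only [hiv, if_false, hdcard]
          omega
    · have hne : ¬(i ∈ c u ∧ i ∈ c v) := fun h =>
        Finset.disjoint_left.mp (hdisj u v huv) h.1 h.2
      dsimp only
      split_ifs with hu hv hv
      · exact absurd ⟨hu, hv⟩ hne
      · exact Finset.disjoint_insert_left.mpr ⟨hnotMem v, hddisj u v huv⟩
      · exact Finset.disjoint_insert_right.mpr ⟨hnotMem u, hddisj u v huv⟩
      · exact hddisj u v huv
  · push Not at hx
    obtain ⟨c, hc, hval⟩ := hG {v | w v = 1} N fun t hts ht => by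
      have := hw t ht
      rwa [Finset.sum_congr rfl (fun v hv => hts hv), Finset.sum_const, smul_eq_mul,
        mul_one] at this
    refine ⟨fun v => if w v = 1 then {c v} else ∅, fun v => ?_, fun v => ?_, fun u v huv => ?_⟩
    · dsimp only
      split_ifs with hv
      · simpa using hc v hv
      · simp
    · have := hx v
      dsimp only
      split_ifs with hv
      · simp [hv]
      · simp; omega
    · dsimp only
      split_ifs with hu hv <;> simp
      exact hval u hu v hv huv

/-- The lexicographic product of two graphs: every vertex of `G` is replaced by a copy of `H`. -/
def lexProduct {V W : Type} (G : SimpleGraph V) (H : SimpleGraph W) : SimpleGraph (V × W) where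
  Adj p q := G.Adj p.1 q.1 ∨ p.1 = q.1 ∧ H.Adj p.2 q.2
  symm := ⟨fun _ _ h => h.imp (fun h => h.symm) fun h => ⟨h.1.symm, h.2.symm⟩⟩
  loopless := ⟨fun _ h => h.elim (fun h => h.ne rfl) fun h => h.2.ne rfl⟩

theorem exists_maximum_clique_subset {W : Type} [Fintype W] (H : SimpleGraph W) (s : Set W) :
    ∃ T : Finset W, ↑T ⊆ s ∧ H.IsClique T ∧
      ∀ t : Finset W, ↑t ⊆ s → H.IsClique t → t.card ≤ T.card := by
  classical
  obtain ⟨T, hT, hmax⟩ := Finset.exists_max_image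
    ({t : Finset W | ↑t ⊆ s ∧ H.IsClique t} : Finset (Finset W)) Finset.card ⟨∅, by simp⟩
  simp only [Finset.mem_filter, Finset.mem_univ, true_and] at hT hmax
  exact ⟨T, hT.1, hT.2, fun t hts ht => hmax t ⟨hts, ht⟩⟩

theorem CliqueColorable.lexProduct {V W : Type} [Fintype V] [Fintype W] {G : SimpleGraph V}
    {H : SimpleGraph W} (hG : CliqueColorable G) (hH : CliqueColorable H) :
    CliqueColorable (lexProduct G H) := by
  classical
  intro s N hs
  choose T hTs hT hTmax using fun v => exists_maximum_clique_subset H {x | (v, x) ∈ s}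
  choose d hd hdval using fun v => hH {x | (v, x) ∈ s} (T v).card (hTmax v)
  obtain ⟨c, hcN, hcard, hdisj⟩ := hG.exists_weighted_coloring (fun v => (T v).card) N
    fun t ht => by
      let U : Finset (V × W) := (t.sigma T).map (Equiv.sigmaEquivProd V W).toEmbedding
      have hU : ∀ p, p ∈ U ↔ p.1 ∈ t ∧ p.2 ∈ T p.1 := by
        intro p
        simp [U, Finset.mem_map_equiv]
      rw [← Finset.card_sigma, ← Finset.card_map (Equiv.sigmaEquivProd V W).toEmbedding]
      refine hs U (fun p hp => hTs p.1 ((hU p).mp hp).2) fun p hp q hq hpq => ?_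
      have hp := (hU p).mp hp
      have hq := (hU q).mp hq
      by_cases h : p.1 = q.1
      · exact Or.inr ⟨h, hT p.1 hp.2 (h ▸ hq.2) fun e => hpq (Prod.ext h e)⟩
      · exact Or.inl (ht hp.1 hq.1 h)
  have hex : ∀ v, ∃ e : ℕ → ℕ, (∀ j < (T v).card, e j ∈ c v) ∧
      ∀ j < (T v).card, ∀ k < (T v).card, e j = e k → j = k := by
    intro v
    let φ := (c v).orderEmbOfFin (hcard v)
    refine ⟨fun j => if h : j < (T v).card then φ ⟨j, h⟩ else 0, fun j hj => ?_,
      fun j hj k hk h => ?_⟩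
    · simp only [hj, dif_pos]
      exact Finset.orderEmbOfFin_mem _ _ _
    · simp only [hj, hk, dif_pos] at h
      simpa using φ.injective h
  choose e hec hinj using hex
  have hmem : ∀ p ∈ s, e p.1 (d p.1 p.2) ∈ c p.1 := fun p hp => hec _ _ (hd p.1 p.2 hp)
  refine ⟨fun p => e p.1 (d p.1 p.2),
    fun p hp => Finset.mem_range.mp (hcN p.1 (hmem p hp)), ?_⟩
  rintro ⟨u, x⟩ hp ⟨v, y⟩ hq (huv | ⟨huv, hxy⟩) heq
  · exact Finset.disjoint_left.mp (hdisj u v huv) (hmem _ hp)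
      (Eq.mpr (congrArg (· ∈ c v) heq) (hmem _ hq))
  · obtain rfl : u = v := huv
    exact hdval u x hp y hq hxy (hinj u _ (hd u x hp) _ (hd u y hq) heq)

/-- Iterated lexicographic powers of `A` contain a monochromatic copy of `A` in every
`k`-colouring. -/
theorem CliqueColorable.exists_monochromatic {V : Type} [Fintype V] {A : SimpleGraph V}
    (hA : CliqueColorable A) (k : ℕ) :
    ∃ (W : Type) (_ : Fintype W) (B : SimpleGraph W), CliqueColorable B ∧
      ∀ c : W → ℕ, (∀ w, c w < k) → ∃ f : A ↪g B, ∀ x y, c (f x) = c (f y) := by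
  induction k with
  | zero => exact ⟨V, inferInstance, A, hA, fun c hc =>
      ⟨Embedding.refl, fun x => absurd (hc x) (Nat.not_lt_zero _)⟩⟩
  | succ k ih =>
    obtain ⟨W, _, B, hB, hmono⟩ := ih
    refine ⟨V × W, inferInstance, _root_.lexProduct A B, hA.lexProduct hB, fun c hc => ?_⟩
    by_cases h : ∃ v, ∀ x, c (v, x) ≠ k
    · obtain ⟨v, hv⟩ := h
      obtain ⟨f, hf⟩ := hmono (fun x => c (v, x)) fun x =>
        lt_of_le_of_ne (Nat.lt_succ_iff.mp (hc _)) (hv x)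
      refine ⟨⟨⟨fun a => (v, f a), fun a b hab => f.injective (Prod.ext_iff.mp hab).2⟩, ?_⟩, hf⟩
      intro a b
      change A.Adj v v ∨ v = v ∧ B.Adj (f a) (f b) ↔ A.Adj a b
      simp
    · push Not at h
      choose g hg using h
      refine ⟨⟨⟨fun a => (a, g a), fun a b hab => (Prod.ext_iff.mp hab).1⟩, ?_⟩,
        fun x y => (hg x).trans (hg y).symm⟩
      intro a b
      refine or_iff_left_of_imp ?_
      rintro ⟨h, hadj⟩
      obtain rfl : a = b := h
      exact absurd rfl hadj.ne

/-- The class of all finite perfect graphs is indivisible. -/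
theorem perfect_indivisible :
    Indivisible (fun n (G : SimpleGraph (Fin n)) => IsPerfect G) := by
  intro n A hA k _
  obtain ⟨W, _, B, hB, hmono⟩ := (IsPerfect.cliqueColorable hA).exists_monochromatic k
  let φ : B ≃g B.overFin rfl := B.overFinIso rfl
  refine ⟨Fintype.card W, B.overFin rfl, (hB.of_embedding φ.symm.toEmbedding).isPerfect,
    fun c => ?_⟩
  obtain ⟨f, hf⟩ := hmono (fun x => c (φ x)) fun x => (c (φ x)).isLt
  exact ⟨f.trans φ.toEmbedding, fun x y => Fin.ext (hf x y)⟩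
end
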